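/- Let q be a continuous real-valued potential on [0,1], a an admissible boundary pulse with support in [0,T], and u a classical solution of the heat problem for q with boundary data a, satisfying |u| + |∂x u| ≤ C e^{ct}. Then for every real λ > c, the Laplace transforms B(λ) = ∫₀^∞ e^{−λt} ∂x u(1,t) dt and A(λ) = ∫₀^T e^{−λt} a(t) dt satisfy the identity B(λ) · φ(1,−λ;q) = A(λ) · ∂x φ(1,−λ;q). -/

import Mathlib

/-- `IsSLSolution q nu f f'` : `f` solves `-f'' + q f = nu * f` on `[0,1]`
with `f 0 = 0`, `f' 0 = 1`, where `f'` is the derivative of `f` on `[0,1]`. -/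
def IsSLSolution (q : ℝ → ℝ) (ν : ℝ) (φ φ' : ℝ → ℝ) : Prop :=
  (∀ x ∈ Set.Icc (0:ℝ) 1, HasDerivAt φ (φ' x) x) ∧
  (∀ x ∈ Set.Icc (0:ℝ) 1, HasDerivAt φ' (q x * φ x - ν * φ x) x) ∧
  φ 0 = 0 ∧ φ' 0 = 1

/-- An admissible boundary pulse: integrable on `(0,∞)`, vanishing beyond some
`T > 0`, and not almost everywhere zero. -/
def IsAdmissiblePulse (a : ℝ → ℝ) : Prop :=
  MeasureTheory.IntegrableOn a (Set.Ioi 0) ∧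
  (∃ T > (0:ℝ), ∀ t > T, a t = 0) ∧
  ¬ (a =ᵐ[MeasureTheory.volume.restrict (Set.Ioi 0)] 0)

/-- `u` (with partial derivatives `ux`, `uxx` in `x` and `ut` in `t`) is a
classical solution of `u_t = u_xx - q(x) u` on `[0,1] × (0,∞)` with zero initial
data, `u(0,t) = 0` and `u(1,t) = a(t)`. -/
def IsHeatSolution (q a : ℝ → ℝ) (u ux uxx ut : ℝ → ℝ → ℝ) : Prop :=
  ContinuousOn (fun p : ℝ × ℝ => u p.1 p.2) (Set.Icc 0 1 ×ˢ Set.Ici 0) ∧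
  (∀ t > (0:ℝ), ∀ x ∈ Set.Icc (0:ℝ) 1, HasDerivAt (fun y => u y t) (ux x t) x) ∧
  (∀ t > (0:ℝ), ∀ x ∈ Set.Icc (0:ℝ) 1, HasDerivAt (fun y => ux y t) (uxx x t) x) ∧
  (∀ t > (0:ℝ), ContinuousOn (fun x => uxx x t) (Set.Icc 0 1)) ∧
  (∀ x ∈ Set.Icc (0:ℝ) 1, ∀ t > (0:ℝ), HasDerivAt (fun s => u x s) (ut x t) t) ∧
  (∀ x ∈ Set.Icc (0:ℝ) 1, ContinuousOn (fun t => ut x t) (Set.Ioi 0)) ∧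
  (∀ x ∈ Set.Ioo (0:ℝ) 1, ∀ t > (0:ℝ), ut x t = uxx x t - q x * u x t) ∧
  (∀ x ∈ Set.Icc (0:ℝ) 1, u x 0 = 0) ∧
  (∀ t > (0:ℝ), u 0 t = 0 ∧ u 1 t = a t)

/-- Exponential growth bound `|u| + |u_x| ≤ C e^{c t}` on `[0,1] × [0,∞)`. -/
def HeatGrowthBound (u ux : ℝ → ℝ → ℝ) (C c : ℝ) : Prop :=
  ∀ x ∈ Set.Icc (0:ℝ) 1, ∀ t ∈ Set.Ici (0:ℝ), |u x t| + |ux x t| ≤ C * Real.exp (c * t)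

/-!
The Laplace transform `w x = ∫₀^∞ e^{-λ t} u(x, t) dt` formally solves `w'' = (q + λ) w`, but the
derivatives `ut` and `uxx` are only separately continuous, so the equation cannot simply be
integrated in time. Instead, `e^{-λ t} u` is extended by `0` to `t ≤ 0`, which gives an eternal
solution `v` of `v_t = v_xx - (q + λ) v`. Finite Riemann sums of its time translates are again
eternal solutions, and they converge to `w` uniformly on `[0, 1] × [0, 1]`. The parabolic maximum
principle, applied to their difference with the solution `W` of `W'' = (q + λ) w` having the
boundary values of `w`, forces `w = W`. Since `w 0 = 0 = φ 0`, constancy of the Wronskian of `φ`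
and `w` gives `w'(1) φ(1) = w(1) φ'(1)`.
-/

open Set Filter Topology MeasureTheory

theorem secondDeriv_nonpos_of_isLocalMax {f f' : ℝ → ℝ} {x d : ℝ}
    (hf : ∀ᶠ y in 𝓝 x, HasDerivAt f (f' y) y) (hf' : HasDerivAt f' d x)
    (hmax : IsLocalMax f x) : d ≤ 0 := by
  by_contra! hd
  have deriv_eq : deriv f =ᶠ[𝓝 x] f' := hf.mono fun _ hy => hy.deriv
  have deriv2_eq : deriv (deriv f) x = d := by rw [deriv_eq.deriv_eq, hf'.deriv]
  have hmin : IsLocalMin f x := isLocalMin_of_deriv_deriv_pos (by rwa [deriv2_eq])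
    hmax.deriv_eq_zero hf.self_of_nhds.continuousAt
  have hconst : f =ᶠ[𝓝 x] fun _ => f x := by
    filter_upwards [hmax, hmin] with y hle hge using le_antisymm hle hge
  have : deriv (deriv f) x = 0 := by simpa using hconst.deriv.deriv_eq
  exact hd.ne' (deriv2_eq ▸ this)

theorem leftDeriv_nonneg_of_isLocalMaxOn {f : ℝ → ℝ} {t d : ℝ}
    (hf : HasDerivWithinAt f d (Iic t) t) (hmax : IsLocalMaxOn f (Iic t) t) : 0 ≤ d := by
  have hcone : (-1 : ℝ) ∈ posTangentConeAt (Iic t) t :=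
    mem_posTangentConeAt_of_segment_subset <|
      (convex_Iic t).segment_subset self_mem_Iic (by simp)
  simpa using hmax.hasFDerivWithinAt_nonpos hf.hasFDerivWithinAt hcone

theorem parabolic_maximum_principle {z zx zxx zt : ℝ → ℝ → ℝ} {a b s τ K : ℝ}
    (hz : ContinuousOn (fun p : ℝ × ℝ => z p.1 p.2) (Icc a b ×ˢ Icc s τ))
    (hzx : ∀ x ∈ Ioo a b, ∀ t ∈ Ioc s τ, HasDerivAt (fun y => z y t) (zx x t) x)
    (hzxx : ∀ x ∈ Ioo a b, ∀ t ∈ Ioc s τ, HasDerivAt (fun y => zx y t) (zxx x t) x)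
    (hzt : ∀ x ∈ Ioo a b, ∀ t ∈ Ioc s τ, HasDerivWithinAt (z x) (zt x t) (Iic t) t)
    (hsub : ∀ x ∈ Ioo a b, ∀ t ∈ Ioc s τ, zt x t < zxx x t)
    (hleft : ∀ t ∈ Icc s τ, z a t ≤ K) (hright : ∀ t ∈ Icc s τ, z b t ≤ K)
    (hbot : ∀ x ∈ Icc a b, z x s ≤ K) :
    ∀ x ∈ Icc a b, ∀ t ∈ Icc s τ, z x t ≤ K := by
  intro x hx t ht
  obtain ⟨⟨x₀, t₀⟩, ⟨hx₀ : x₀ ∈ Icc a b, ht₀ : t₀ ∈ Icc s τ⟩, hmax⟩ :=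
    (isCompact_Icc.prod isCompact_Icc).exists_isMaxOn ⟨(x, t), hx, ht⟩ hz
  have hle : ∀ y ∈ Icc a b, ∀ r ∈ Icc s τ, z y r ≤ z x₀ t₀ := fun y hy r hr =>
    hmax (mk_mem_prod hy hr)
  refine (hle x hx t ht).trans ?_
  rcases hx₀.1.eq_or_lt with rfl | hax
  · exact hleft t₀ ht₀
  rcases hx₀.2.eq_or_lt with rfl | hxb
  · exact hright t₀ ht₀
  rcases ht₀.1.eq_or_lt with rfl | hst
  · exact hbot x₀ hx₀
  have hx₀' : x₀ ∈ Ioo a b := ⟨hax, hxb⟩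
  have ht₀' : t₀ ∈ Ioc s τ := ⟨hst, ht₀.2⟩
  have hzt_nonneg : 0 ≤ zt x₀ t₀ := by
    refine leftDeriv_nonneg_of_isLocalMaxOn (hzt x₀ hx₀' t₀ ht₀') ?_
    filter_upwards [Icc_mem_nhdsLE hst] with r hr
    exact hle x₀ hx₀ r ⟨hr.1, hr.2.trans ht₀.2⟩
  have hzxx_nonpos : zxx x₀ t₀ ≤ 0 := by
    refine secondDeriv_nonpos_of_isLocalMax (f := fun y => z y t₀) (f' := fun y => zx y t₀)
      ?_ (hzxx x₀ hx₀' t₀ ht₀') ?_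
    · filter_upwards [Ioo_mem_nhds hax hxb] with y hy using hzx y hy t₀ ht₀'
    · filter_upwards [Icc_mem_nhds hax hxb] with y hy using hle y hy t₀ ht₀
  exact absurd (hsub x₀ hx₀' t₀ ht₀') (by linarith)

/-- `v`, with `x`-derivatives `vx` and `vxx`, is an eternal (defined for all `t : ℝ`) classical
solution of `v_t = v_xx - r v` over the spatial domain `I`. Only the left derivative in time is
required, so that a solution issued from zero data can be extended by `0` to negative times. -/
structure IsEternalHeatSolution (I : Set ℝ) (r : ℝ → ℝ) (v vx vxx : ℝ → ℝ → ℝ) : Prop where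
  hasDerivAt_x : ∀ x ∈ I, ∀ t, HasDerivAt (fun y => v y t) (vx x t) x
  hasDerivAt_xx : ∀ x ∈ I, ∀ t, HasDerivAt (fun y => vx y t) (vxx x t) x
  hasDerivWithinAt_t : ∀ x ∈ I, ∀ t,
    HasDerivWithinAt (v x) (vxx x t - r x * v x t) (Iic t) t

/-- The left Riemann sum of `f` over `[t, t + n * h]` with `n` steps of size `h`. -/
def leftRiemannSum (f : ℝ → ℝ) (t h : ℝ) (n : ℕ) : ℝ :=
  h * ∑ k ∈ Finset.range n, f (t + k * h)

namespace IsEternalHeatSolution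

variable {I : Set ℝ} {r : ℝ → ℝ} {v vx vxx : ℝ → ℝ → ℝ}

theorem neg (hv : IsEternalHeatSolution I r v vx vxx) :
    IsEternalHeatSolution I r (fun x t => -v x t) (fun x t => -vx x t) (fun x t => -vxx x t) where
  hasDerivAt_x x hx t := (hv.hasDerivAt_x x hx t).neg
  hasDerivAt_xx x hx t := (hv.hasDerivAt_xx x hx t).neg
  hasDerivWithinAt_t x hx t := (hv.hasDerivWithinAt_t x hx t).neg.congr_deriv (by ring)

theorem leftRiemannSum_translate (hv : IsEternalHeatSolution I r v vx vxx) (c h : ℝ) (n : ℕ) :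
    IsEternalHeatSolution I r (fun x t => leftRiemannSum (v x) (t + c) h n)
      (fun x t => leftRiemannSum (vx x) (t + c) h n)
      (fun x t => leftRiemannSum (vxx x) (t + c) h n) where
  hasDerivAt_x x hx t :=
    (HasDerivAt.fun_sum (u := Finset.range n)
      fun k _ => hv.hasDerivAt_x x hx (t + c + k * h)).const_mul h
  hasDerivAt_xx x hx t :=
    (HasDerivAt.fun_sum (u := Finset.range n)
      fun k _ => hv.hasDerivAt_xx x hx (t + c + k * h)).const_mul h
  hasDerivWithinAt_t x hx t := by
    have hshift (k : ℕ) : HasDerivWithinAt (fun s => v x (s + c + k * h))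
        (vxx x (t + c + k * h) - r x * v x (t + c + k * h)) (Iic t) t := by
      have hd := (((hasDerivAt_id t).add_const c).add_const (k * h)).hasDerivWithinAt (s := Iic t)
      simpa [Function.comp_def] using
        (hv.hasDerivWithinAt_t x hx (t + c + k * h)).scomp t hd fun s hs => by simpa using hs
    refine ((HasDerivWithinAt.fun_sum fun k _ => hshift k).const_mul h).congr_deriv ?_
    simp only [leftRiemannSum, Finset.sum_sub_distrib, Finset.mul_sum, mul_sub, mul_left_comm]

/-- The penalty `(x - a) (x - b)` makes the comparison function a strict subsolution, and the
penalty `t` moves its maximum off the initial time. -/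
theorem sub_add_penalty_le {a b ε K : ℝ} {w W W' : ℝ → ℝ}
    (hv : IsEternalHeatSolution (Ioo a b) r v vx vxx)
    (hvc : ContinuousOn (fun p : ℝ × ℝ => v p.1 p.2) (Icc a b ×ˢ Icc 0 1))
    (hWc : ContinuousOn W (Icc a b)) (hW : ∀ x ∈ Ioo a b, HasDerivAt W (W' x) x)
    (hW' : ∀ x ∈ Ioo a b, HasDerivAt W' (r x * w x) x)
    (hperturb : ∀ x ∈ Ioo a b, ∀ t ∈ Ioc (0 : ℝ) 1, r x * (w x - v x t) < ε)
    (hleft : ∀ t ∈ Icc (0 : ℝ) 1, v a t - W a + ε * t ≤ K)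
    (hright : ∀ t ∈ Icc (0 : ℝ) 1, v b t - W b + ε * t ≤ K)
    (hbot : ∀ x ∈ Icc a b, v x 0 - W x + ε * ((x - a) * (x - b)) ≤ K) :
    ∀ x ∈ Icc a b, ∀ t ∈ Icc (0 : ℝ) 1, v x t - W x + ε * ((x - a) * (x - b) + t) ≤ K := by
  have hpen (x t : ℝ) : HasDerivAt (fun y => ε * ((y - a) * (y - b) + t))
      (ε * ((x - a) + (x - b))) x :=
    ((((hasDerivAt_id x).sub_const a).mul ((hasDerivAt_id x).sub_const b)).add_const t).const_mul ε
      |>.congr_deriv (by simp only [id]; ring)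
  have hpen' (x : ℝ) : HasDerivAt (fun y => ε * ((y - a) + (y - b))) (ε * 2) x :=
    (((hasDerivAt_id x).sub_const a).add ((hasDerivAt_id x).sub_const b)).const_mul ε
      |>.congr_deriv (by ring)
  have hpent (x t : ℝ) : HasDerivWithinAt (fun s => ε * ((x - a) * (x - b) + s)) ε (Iic t) t :=
    (((hasDerivAt_id t).const_add _).const_mul ε).hasDerivWithinAt.congr_deriv (mul_one ε)
  exact parabolic_maximum_principle
    (z := fun x t => v x t - W x + ε * ((x - a) * (x - b) + t))
    (zx := fun x t => vx x t - W' x + ε * ((x - a) + (x - b)))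
    (zxx := fun x t => vxx x t - r x * w x + ε * 2)
    (zt := fun x t => vxx x t - r x * v x t + ε)
    ((hvc.sub (hWc.comp continuousOn_fst fun _ hp => hp.1)).add (by fun_prop))
    (fun x hx t _ => ((hv.hasDerivAt_x x hx t).sub (hW x hx)).add (hpen x t))
    (fun x hx t _ => ((hv.hasDerivAt_xx x hx t).sub (hW' x hx)).add (hpen' x))
    (fun x hx t _ => ((hv.hasDerivWithinAt_t x hx t).sub_const (W x)).add (hpent x t))
    (fun x hx t ht => by linarith [hperturb x hx t ht])
    (fun t ht => by simpa using hleft t ht) (fun t ht => by simpa using hright t ht)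
    (fun x hx => by simpa using hbot x hx)

end IsEternalHeatSolution

/-- `w` is a uniform limit over `[a, b] × [0, 1]` of eternal solutions of `v_t = v_xx - r v`,
hence formally a stationary solution: `w'' = r w`. -/
def IsStationaryLimit (a b : ℝ) (r w : ℝ → ℝ) : Prop :=
  ∀ ε > 0, ∃ v vx vxx : ℝ → ℝ → ℝ, IsEternalHeatSolution (Ioo a b) r v vx vxx ∧
    ContinuousOn (fun p : ℝ × ℝ => v p.1 p.2) (Icc a b ×ˢ Icc 0 1) ∧
    ∀ x ∈ Icc a b, ∀ t ∈ Icc (0 : ℝ) 1, |v x t - w x| ≤ ε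

namespace IsStationaryLimit

variable {a b R : ℝ} {r w W W' : ℝ → ℝ}

theorem neg (hw : IsStationaryLimit a b r w) : IsStationaryLimit a b r (fun x => -w x) := by
  intro ε hε
  obtain ⟨v, vx, vxx, hv, hvc, hvw⟩ := hw ε hε
  refine ⟨_, _, _, hv.neg, hvc.neg, fun x hx t ht => ?_⟩
  rw [neg_sub_neg, abs_sub_comm]
  exact hvw x hx t ht

theorem continuousOn (hw : IsStationaryLimit a b r w) : ContinuousOn w (Icc a b) := by
  refine continuousOn_of_uniform_approx_of_continuousOn fun U hU => ?_
  obtain ⟨ε, hε, hεU⟩ := Metric.mem_uniformity_dist.1 hU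
  obtain ⟨v, _, _, _, hvc, hvw⟩ := hw (ε / 2) (half_pos hε)
  refine ⟨fun x => v x 0, hvc.comp (f := fun x : ℝ => (x, (0 : ℝ))) (by fun_prop)
    fun x hx => ⟨hx, by simp⟩, fun x hx => hεU ?_⟩
  rw [dist_comm, Real.dist_eq]
  linarith [hvw x hx 0 (by simp)]

theorem sub_add_penalty_nonpos (hw : IsStationaryLimit a b r w) (hr : ∀ x ∈ Ioo a b, |r x| ≤ R)
    (hWc : ContinuousOn W (Icc a b)) (hW : ∀ x ∈ Ioo a b, HasDerivAt W (W' x) x)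
    (hW' : ∀ x ∈ Ioo a b, HasDerivAt W' (r x * w x) x) (ha : w a = W a) (hb : w b = W b)
    {ε : ℝ} (hε : 0 < ε) : ∀ x ∈ Icc a b, w x - W x + ε * ((x - a) * (x - b)) ≤ 0 := by
  intro x₁ hx₁
  obtain ⟨x₀, hx₀, hmax⟩ := isCompact_Icc.exists_isMaxOn ⟨x₁, hx₁⟩
    (f := fun x => w x - W x + ε * ((x - a) * (x - b)))
    ((hw.continuousOn.sub hWc).add (by fun_prop))
  set M := w x₀ - W x₀ + ε * ((x₀ - a) * (x₀ - b))
  have hleM : ∀ x ∈ Icc a b, w x - W x + ε * ((x - a) * (x - b)) ≤ M := fun x hx => hmax hx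
  refine (hleM x₁ hx₁).trans ?_
  by_contra! hM0
  have hab : a ≤ b := hx₀.1.trans hx₀.2
  set η := min (M / 3) (ε / (|R| + 3))
  have hη : 0 < η := by positivity
  have hηM : 3 * η ≤ M := by linarith [min_le_left (M / 3) (ε / (|R| + 3))]
  have hηε : η * (|R| + 3) ≤ ε := (le_div_iff₀ (by positivity)).1 (min_le_right _ _)
  have hR : 0 ≤ η * |R| := by positivity
  obtain ⟨v, vx, vxx, hv, hvc, hvw⟩ := hw η hη
  have hvw_le : ∀ x ∈ Icc a b, ∀ t ∈ Icc (0 : ℝ) 1, v x t ≤ w x + η := fun x hx t ht => by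
    linarith [(abs_le.1 (hvw x hx t ht)).2]
  have hperturb : ∀ x ∈ Ioo a b, ∀ t ∈ Ioc (0 : ℝ) 1, r x * (w x - v x t) < ε := by
    intro x hx t ht
    have : |r x * (w x - v x t)| ≤ |R| * η := by
      rw [abs_mul, abs_sub_comm (w x)]
      exact mul_le_mul ((hr x hx).trans (le_abs_self R))
        (hvw x (Ioo_subset_Icc_self hx) t (Ioc_subset_Icc_self ht)) (abs_nonneg _) (abs_nonneg _)
    linarith [le_of_abs_le this]
  have hεt : ∀ t ∈ Icc (0 : ℝ) 1, ε * t ≤ ε := fun t ht => mul_le_of_le_one_right hε.le ht.2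
  have hupper := hv.sub_add_penalty_le (K := M - 2 * η + ε) hvc hWc hW hW' hperturb
    (fun t ht => by linarith [hvw_le a ⟨le_rfl, hab⟩ t ht, hεt t ht])
    (fun t ht => by linarith [hvw_le b ⟨hab, le_rfl⟩ t ht, hεt t ht])
    (fun x hx => by linarith [hvw_le x hx 0 (by simp), hleM x hx]) x₀ hx₀ 1 (by simp)
  have hlower := (abs_le.1 (hvw x₀ hx₀ 1 (by simp))).1
  linarith

theorem le_of_stationary (hw : IsStationaryLimit a b r w) (hr : ∀ x ∈ Ioo a b, |r x| ≤ R)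
    (hWc : ContinuousOn W (Icc a b)) (hW : ∀ x ∈ Ioo a b, HasDerivAt W (W' x) x)
    (hW' : ∀ x ∈ Ioo a b, HasDerivAt W' (r x * w x) x) (ha : w a = W a) (hb : w b = W b) :
    ∀ x ∈ Icc a b, w x ≤ W x := by
  intro x hx
  have hlim : Tendsto (fun ε : ℝ => w x - W x + ε * ((x - a) * (x - b))) (𝓝[>] 0)
      (𝓝 (w x - W x)) := by
    have : Continuous fun ε : ℝ => w x - W x + ε * ((x - a) * (x - b)) := by fun_prop
    simpa using (this.tendsto 0).mono_left nhdsWithin_le_nhds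
  refine sub_nonpos.1 (le_of_tendsto hlim ?_)
  filter_upwards [self_mem_nhdsWithin] with ε hε
    using hw.sub_add_penalty_nonpos hr hWc hW hW' ha hb hε x hx

theorem eqOn_of_stationary (hw : IsStationaryLimit a b r w) (hr : ∀ x ∈ Ioo a b, |r x| ≤ R)
    (hWc : ContinuousOn W (Icc a b)) (hW : ∀ x ∈ Ioo a b, HasDerivAt W (W' x) x)
    (hW' : ∀ x ∈ Ioo a b, HasDerivAt W' (r x * w x) x) (ha : w a = W a) (hb : w b = W b) :
    EqOn w W (Icc a b) := fun x hx =>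
  (hw.le_of_stationary hr hWc hW hW' ha hb x hx).antisymm <| neg_le_neg_iff.1 <|
    hw.neg.le_of_stationary hr hWc.neg (fun y hy => (hW y hy).neg)
      (fun y hy => (hW' y hy).neg.congr_deriv (by ring)) (congrArg Neg.neg ha)
      (congrArg Neg.neg hb) x hx

end IsStationaryLimit

theorem abs_leftRiemannSum_sub_integral_le {f : ℝ → ℝ} (hf : Continuous f) {t h ε : ℝ}
    (hh : 0 ≤ h) (n : ℕ)
    (hosc : ∀ k < n, ∀ s ∈ Icc (t + k * h) (t + k * h + h), |f (t + k * h) - f s| ≤ ε) :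
    |leftRiemannSum f t h n - ∫ s in t..t + n * h, f s| ≤ n * h * ε := by
  induction n with
  | zero => simp [leftRiemannSum]
  | succ n ih =>
    set c := t + n * h with hc
    have hlast : |h * f c - ∫ s in c..c + h, f s| ≤ h * ε := by
      have hconst : h * f c - ∫ s in c..c + h, f s = ∫ s in c..c + h, (f c - f s) := by
        rw [intervalIntegral.integral_sub intervalIntegrable_const (hf.intervalIntegrable _ _),
          intervalIntegral.integral_const, add_sub_cancel_left, smul_eq_mul]
      have hbd := intervalIntegral.norm_integral_le_of_norm_le_const (a := c) (b := c + h)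
        (f := fun s => f c - f s) (C := ε) fun s hs =>
          hosc n n.lt_succ_self s (Ioc_subset_Icc_self (uIoc_of_le (by linarith : c ≤ c + h) ▸ hs))
      rw [hconst, ← Real.norm_eq_abs]
      simpa [abs_of_nonneg hh, mul_comm] using hbd
    have hsum : leftRiemannSum f t h (n + 1) = leftRiemannSum f t h n + h * f c := by
      rw [leftRiemannSum, Finset.sum_range_succ, mul_add, leftRiemannSum]
    have hint : ∫ s in t..t + (n + 1 : ℕ) * h, f s
        = (∫ s in t..c, f s) + ∫ s in c..c + h, f s := by
      rw [intervalIntegral.integral_add_adjacent_intervals (hf.intervalIntegrable _ _)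
        (hf.intervalIntegrable _ _), hc]
      push_cast
      ring_nf
    rw [hsum, hint, add_sub_add_comm]
    calc _ ≤ n * h * ε + h * ε := (abs_add_le _ _).trans
          (add_le_add (ih fun k hk => hosc k (hk.trans n.lt_succ_self)) hlast)
      _ = (n + 1 : ℕ) * h * ε := by push_cast; ring

theorem exists_leftRiemannSum_near {X : Type*} [PseudoMetricSpace X] {K : Set X}
    (hK : IsCompact K) {v : X → ℝ → ℝ}
    (hv : ContinuousOn (fun p : X × ℝ => v p.1 p.2) (K ×ˢ univ)) (α β : ℝ) {ℓ ε : ℝ}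
    (hℓ : 0 < ℓ) (hε : 0 < ε) : ∃ (h : ℝ) (n : ℕ), ∀ x ∈ K, ∀ t ∈ Icc α β,
      |leftRiemannSum (v x) t h n - ∫ s in t..t + ℓ, v x s| ≤ ε := by
  obtain ⟨δ, hδ, hunif⟩ := Metric.uniformContinuousOn_iff_le.1
    ((hK.prod (isCompact_Icc (a := α) (b := β + ℓ))).uniformContinuousOn_of_continuous
      (hv.mono (prod_mono_right (subset_univ _)))) (ε / ℓ) (by positivity)
  obtain ⟨n, hn⟩ := exists_nat_gt (ℓ / δ)
  have hn0 : (0 : ℝ) < n := (by positivity : 0 < ℓ / δ).trans hn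
  have hnh : n * (ℓ / n) = ℓ := by field_simp
  have hh0 : 0 < ℓ / n := by positivity
  have hhδ : ℓ / n ≤ δ := (div_le_iff₀ hn0).2 (by linarith [(div_lt_iff₀ hδ).1 hn])
  refine ⟨ℓ / n, n, fun x hx t ht => ?_⟩
  have hvx : Continuous (v x) := continuousOn_univ.1 (hv.uncurry_left x hx)
  have herr := abs_leftRiemannSum_sub_integral_le hvx hh0.le n (t := t) (ε := ε / ℓ) ?_
  · rwa [hnh, mul_div_cancel₀ _ hℓ.ne'] at herr
  intro k hk s hs
  have hkh : 0 ≤ k * (ℓ / n) := by positivity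
  have hk1 : k * (ℓ / n) + ℓ / n ≤ ℓ := by
    have : ((k : ℝ) + 1) ≤ n := by exact_mod_cast hk
    nlinarith [mul_le_mul_of_nonneg_right this hh0.le]
  have hnode : t + k * (ℓ / n) ∈ Icc α (β + ℓ) := ⟨by linarith [ht.1], by linarith [ht.2]⟩
  have hsmem : s ∈ Icc α (β + ℓ) := ⟨hnode.1.trans hs.1, by linarith [hs.2, ht.2]⟩
  have hdist : dist (x, t + k * (ℓ / n)) (x, s) ≤ δ := by
    rw [dist_prod_same_left, Real.dist_eq, abs_sub_comm, abs_of_nonneg (by linarith [hs.1])]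
    linarith [hs.2]
  exact hunif _ ⟨hx, hnode⟩ _ ⟨hx, hsmem⟩ hdist

theorem exists_window_integral_near {β : ℝ → ℝ} (hβ : Integrable β) {ε : ℝ} (hε : 0 < ε) :
    ∃ L > 0, ∀ t ∈ Icc (0 : ℝ) 1, ∀ f : ℝ → ℝ, AEStronglyMeasurable f → (∀ s, |f s| ≤ β s) →
      |(∫ s in (t - L)..(t + L), f s) - ∫ s, f s| ≤ ε := by
  have hlim : Tendsto (fun L : ℝ => ∫ s in (1 - L)..L, β s) atTop (𝓝 (∫ s, β s)) :=
    intervalIntegral_tendsto_integral hβ (tendsto_atBot_add_const_left _ 1 tendsto_neg_atTop_atBot)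
      tendsto_id
  obtain ⟨L, hLε, hL⟩ := ((hlim.eventually_const_le (sub_lt_self _ hε)).and
    (eventually_ge_atTop 1)).exists
  refine ⟨L, by linarith, fun t ht f hf hfβ => ?_⟩
  have hfi : Integrable f := hβ.mono' hf (ae_of_all _ hfβ)
  have hβ0 (s : ℝ) : 0 ≤ β s := (abs_nonneg _).trans (hfβ s)
  have hcore : ∫ s in (1 - L)..L, β s ≤ ∫ s in Ioc (t - L) (t + L), β s := by
    rw [intervalIntegral.integral_of_le (by linarith)]
    exact setIntegral_mono_set hβ.integrableOn (ae_of_all _ hβ0)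
      (Ioc_subset_Ioc (by linarith [ht.2]) (by linarith [ht.1])).eventuallyLE
  have htail : (∫ s in Ioc (t - L) (t + L), f s) - ∫ s, f s
      = -∫ s in (Ioc (t - L) (t + L))ᶜ, f s := by
    rw [← integral_add_compl measurableSet_Ioc hfi (s := Ioc (t - L) (t + L))]
    ring
  rw [intervalIntegral.integral_of_le (by linarith), htail, abs_neg]
  calc ‖∫ s in (Ioc (t - L) (t + L))ᶜ, f s‖
      ≤ ∫ s in (Ioc (t - L) (t + L))ᶜ, β s :=
        norm_integral_le_of_norm_le hβ.integrableOn (ae_of_all _ hfβ)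
    _ = (∫ s, β s) - ∫ s in Ioc (t - L) (t + L), β s := by
        rw [← integral_add_compl measurableSet_Ioc hβ (s := Ioc (t - L) (t + L))]
        ring
    _ ≤ ε := by linarith

theorem IsEternalHeatSolution.isStationaryLimit_integral {a b : ℝ} {r β : ℝ → ℝ}
    {v vx vxx : ℝ → ℝ → ℝ} (hv : IsEternalHeatSolution (Ioo a b) r v vx vxx)
    (hvc : ContinuousOn (fun p : ℝ × ℝ => v p.1 p.2) (Icc a b ×ˢ univ)) (hβ : Integrable β)
    (hvβ : ∀ x ∈ Icc a b, ∀ t, |v x t| ≤ β t) :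
    IsStationaryLimit a b r fun x => ∫ t, v x t := by
  intro ε hε
  have hvx : ∀ x ∈ Icc a b, Continuous (v x) := fun x hx =>
    continuousOn_univ.1 (hvc.uncurry_left x hx)
  obtain ⟨L, hL, hwindow⟩ := exists_window_integral_near hβ (half_pos hε)
  obtain ⟨h, n, hsum⟩ := exists_leftRiemannSum_near isCompact_Icc hvc (-L) (1 - L)
    (ℓ := 2 * L) (by positivity) (half_pos hε)
  refine ⟨_, _, _, hv.leftRiemannSum_translate (-L) h n, ?_, fun x hx t ht => ?_⟩
  · unfold leftRiemannSum
    refine continuousOn_const.mul (continuousOn_finsetSum _ fun k _ => ?_)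
    exact hvc.comp (f := fun p : ℝ × ℝ => (p.1, p.2 + -L + k * h)) (by fun_prop)
      fun p hp => ⟨hp.1, mem_univ _⟩
  · have hS := hsum x hx (t + -L) ⟨by linarith [ht.1], by linarith [ht.2]⟩
    have hW := hwindow t ht (v x) (hvx x hx).aestronglyMeasurable (hvβ x hx)
    rw [show t + -L + 2 * L = t + L by ring, ← sub_eq_add_neg] at hS
    exact (abs_sub_le _ _ _).trans ((add_le_add hS hW).trans_eq (add_halves ε))

theorem hasDerivWithinAt_integral_of_dominated {α : Type*} [MeasurableSpace α] {μ : Measure α}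
    {F F' : ℝ → α → ℝ} {bound : α → ℝ} {s : Set ℝ} {x : ℝ} (hs : Convex ℝ s) (hx : x ∈ s)
    (hF : ∀ y ∈ s, Integrable (F y) μ)
    (hF' : ∀ᵐ t ∂μ, ∀ y ∈ s, HasDerivWithinAt (fun z => F z t) (F' y t) s y)
    (hbound : ∀ᵐ t ∂μ, ∀ y ∈ s, |F' y t| ≤ bound t) (hbi : Integrable bound μ) :
    HasDerivWithinAt (fun y => ∫ t, F y t ∂μ) (∫ t, F' x t ∂μ) s x := by
  rw [hasDerivWithinAt_iff_tendsto_slope]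
  have hslope : ∀ y ∈ s, slope (fun y => ∫ t, F y t ∂μ) x y
      = ∫ t, slope (fun z => F z t) x y ∂μ := fun y hy => by
    simp only [slope_def_field]
    rw [integral_div, integral_sub (hF y hy) (hF x hx)]
  refine Tendsto.congr' (f₁ := fun y => ∫ t, slope (fun z => F z t) x y ∂μ) ?_ ?_
  · filter_upwards [self_mem_nhdsWithin] with y hy using (hslope y hy.1).symm
  refine tendsto_integral_filter_of_dominated_convergence bound ?_ ?_ hbi ?_
  · filter_upwards [self_mem_nhdsWithin] with y hy
    simp only [slope_def_field]
    exact (((hF y hy.1).sub (hF x hx)).div_const _).aestronglyMeasurable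
  · filter_upwards [self_mem_nhdsWithin] with y hy
    filter_upwards [hF', hbound] with t hFt hbt
    have hmvt := hs.norm_image_sub_le_of_norm_hasDerivWithin_le hFt hbt hx hy.1
    rw [slope_def_field, norm_div]
    exact div_le_of_le_mul₀ (norm_nonneg _) ((abs_nonneg _).trans (hbt x hx)) hmvt
  · filter_upwards [hF'] with t hFt using hasDerivWithinAt_iff_tendsto_slope.1 (hFt x hx)

theorem exists_dirichlet_solution {a b : ℝ} (hab : a < b) {g : ℝ → ℝ}
    (hg : ContinuousOn g (Icc a b)) (α β : ℝ) :
    ∃ W W' : ℝ → ℝ, (∀ x, HasDerivAt W (W' x) x) ∧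
      (∀ x ∈ Icc a b, HasDerivAt W' (g x) x) ∧ W a = α ∧ W b = β := by
  set G : ℝ → ℝ := IccExtend hab.le ((Icc a b).domRestrict g)
  have hG : Continuous G := hg.domRestrict.Icc_extend'
  have hGg : ∀ x ∈ Icc a b, G x = g x := fun x hx => IccExtend_of_mem hab.le _ hx
  set P : ℝ → ℝ := fun x => ∫ s in a..x, G s
  have hP (x : ℝ) : HasDerivAt P (G x) x := (hG.integral_hasStrictDerivAt a x).hasDerivAt
  have hPc : Continuous P := continuous_iff_continuousAt.2 fun x => (hP x).continuousAt
  set Q : ℝ → ℝ := fun x => ∫ s in a..x, P s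
  have hQ (x : ℝ) : HasDerivAt Q (P x) x := (hPc.integral_hasStrictDerivAt a x).hasDerivAt
  set m := (β - α - Q b) / (b - a) with hm
  refine ⟨fun x => α + m * (x - a) + Q x, fun x => m + P x, fun x => ?_, fun x hx => ?_, ?_, ?_⟩
  · exact (((((hasDerivAt_id x).sub_const a).const_mul m).const_add α).add (hQ x)).congr_deriv
      (by ring)
  · exact hGg x hx ▸ (hP x).const_add m
  · simp [Q]
  · have : b - a ≠ 0 := (sub_pos.2 hab).ne'
    simp only [hm]
    field_simp
    ring

theorem wronskian_eq {a b : ℝ} (hab : a ≤ b) {p f f' g g' : ℝ → ℝ}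
    (hf : ∀ x ∈ Icc a b, HasDerivAt f (f' x) x) (hf' : ∀ x ∈ Icc a b, HasDerivAt f' (p x * f x) x)
    (hg : ∀ x ∈ Icc a b, HasDerivAt g (g' x) x)
    (hg' : ∀ x ∈ Icc a b, HasDerivAt g' (p x * g x) x) :
    f b * g' b - f' b * g b = f a * g' a - f' a * g a := by
  have hderiv : ∀ x ∈ Icc a b, HasDerivAt (fun x => f x * g' x - f' x * g x) 0 x := fun x hx =>
    (((hf x hx).mul (hg' x hx)).sub ((hf' x hx).mul (hg x hx))).congr_deriv (by ring)
  exact constant_of_has_deriv_right_zero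
    (fun x hx => (hderiv x hx).continuousAt.continuousWithinAt)
    (fun x hx => (hderiv x (Ico_subset_Icc_self hx)).hasDerivWithinAt) b ⟨hab, le_rfl⟩

theorem IsEternalHeatSolution.exists_stationary_eqOn_integral {a b : ℝ} (hab : a < b)
    {r β : ℝ → ℝ} (hr : ContinuousOn r (Icc a b)) {v vx vxx : ℝ → ℝ → ℝ}
    (hv : IsEternalHeatSolution (Ioo a b) r v vx vxx)
    (hvc : ContinuousOn (fun p : ℝ × ℝ => v p.1 p.2) (Icc a b ×ˢ univ)) (hβ : Integrable β)
    (hvβ : ∀ x ∈ Icc a b, ∀ t, |v x t| ≤ β t) :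
    ∃ W W' : ℝ → ℝ, (∀ x, HasDerivAt W (W' x) x) ∧
      (∀ x ∈ Icc a b, HasDerivAt W' (r x * W x) x) ∧
      EqOn (fun x => ∫ t, v x t) W (Icc a b) := by
  have hw := hv.isStationaryLimit_integral hvc hβ hvβ
  obtain ⟨W, W', hW, hW', ha, hb⟩ :=
    exists_dirichlet_solution hab (hr.mul hw.continuousOn) (∫ t, v a t) (∫ t, v b t)
  obtain ⟨R, hR⟩ := isCompact_Icc.exists_bound_of_continuousOn hr
  have heq : EqOn (fun x => ∫ t, v x t) W (Icc a b) :=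
    hw.eqOn_of_stationary (fun x hx => hR x (Ioo_subset_Icc_self hx))
      (fun x _ => (hW x).continuousAt.continuousWithinAt) (fun x _ => hW x)
      (fun x hx => hW' x (Ioo_subset_Icc_self hx)) ha.symm hb.symm
  exact ⟨W, W', hW, fun x hx => (hW' x hx).congr_deriv (congrArg (r x * ·) (heq hx)), heq⟩

/-- The exponentially damped field `e^{-λ t} u(x, t)` for `t > 0`, extended by `0` to `t ≤ 0`.
Its integral over all times is the Laplace transform of `u x` at `λ`. -/
noncomputable def dampedExtension (lam : ℝ) (u : ℝ → ℝ → ℝ) (x t : ℝ) : ℝ :=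
  (Ioi 0).indicator (fun s => Real.exp (-lam * s) * u x s) t

theorem dampedExtension_of_pos (lam : ℝ) (u : ℝ → ℝ → ℝ) (x : ℝ) {t : ℝ} (ht : 0 < t) :
    dampedExtension lam u x t = Real.exp (-lam * t) * u x t :=
  indicator_of_mem (mem_Ioi.2 ht) _

theorem dampedExtension_of_nonpos (lam : ℝ) (u : ℝ → ℝ → ℝ) (x : ℝ) {t : ℝ} (ht : t ≤ 0) :
    dampedExtension lam u x t = 0 :=
  indicator_of_notMem (notMem_Ioi.2 ht) _

theorem integral_dampedExtension (lam : ℝ) (u : ℝ → ℝ → ℝ) (x : ℝ) :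
    ∫ t, dampedExtension lam u x t = ∫ t in Ioi 0, Real.exp (-lam * t) * u x t :=
  integral_indicator measurableSet_Ioi

theorem hasDerivAt_dampedExtension (lam : ℝ) {u ux : ℝ → ℝ → ℝ} {x t : ℝ}
    (hu : 0 < t → HasDerivAt (fun y => u y t) (ux x t) x) :
    HasDerivAt (fun y => dampedExtension lam u y t) (dampedExtension lam ux x t) x := by
  rcases le_or_gt t 0 with ht | ht
  · simpa only [dampedExtension_of_nonpos _ _ _ ht] using hasDerivAt_const x (0 : ℝ)
  · simpa only [dampedExtension_of_pos _ _ _ ht] using (hu ht).const_mul _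

theorem hasDerivWithinAt_dampedExtension (lam : ℝ) {u ut : ℝ → ℝ → ℝ} {x t : ℝ}
    (hu : 0 < t → HasDerivAt (u x) (ut x t) t) :
    HasDerivWithinAt (dampedExtension lam u x)
      (dampedExtension lam ut x t - lam * dampedExtension lam u x t) (Iic t) t := by
  rcases le_or_gt t 0 with ht | ht
  · simp only [dampedExtension_of_nonpos _ _ _ ht, mul_zero, sub_zero]
    exact (hasDerivWithinAt_const t _ (0 : ℝ)).congr
      (fun s hs => dampedExtension_of_nonpos _ _ _ (le_trans hs ht))
      (dampedExtension_of_nonpos _ _ _ ht)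
  · have hexp : HasDerivAt (fun s => Real.exp (-lam * s)) (Real.exp (-lam * t) * -lam) t :=
      (((hasDerivAt_id t).const_mul (-lam)).congr_deriv (mul_one _)).exp
    have heq : dampedExtension lam u x =ᶠ[𝓝 t] fun s => Real.exp (-lam * s) * u x s := by
      filter_upwards [lt_mem_nhds ht] with s hs using dampedExtension_of_pos lam u x hs
    refine ((hexp.mul (hu ht)).congr_of_eventuallyEq heq).hasDerivWithinAt.congr_deriv ?_
    rw [dampedExtension_of_pos _ _ _ ht, dampedExtension_of_pos _ _ _ ht]
    ring

theorem abs_dampedExtension_le {lam C c : ℝ} {u : ℝ → ℝ → ℝ} {x : ℝ}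
    (hu : ∀ t > 0, |u x t| ≤ C * Real.exp (c * t)) (t : ℝ) :
    |dampedExtension lam u x t|
      ≤ (Ioi 0).indicator (fun s => C * Real.exp ((c - lam) * s)) t := by
  rcases le_or_gt t 0 with ht | ht
  · rw [dampedExtension_of_nonpos _ _ _ ht, indicator_of_notMem (notMem_Ioi.2 ht), abs_zero]
  · rw [dampedExtension_of_pos _ _ _ ht, indicator_of_mem (mem_Ioi.2 ht), abs_mul, Real.abs_exp]
    calc Real.exp (-lam * t) * |u x t|
        ≤ Real.exp (-lam * t) * (C * Real.exp (c * t)) := by gcongr; exact hu t ht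
      _ = C * Real.exp ((c - lam) * t) := by
        rw [mul_left_comm, ← Real.exp_add]
        ring_nf

theorem integrable_indicator_exp_mul {c lam : ℝ} (hlam : c < lam) (C : ℝ) :
    Integrable ((Ioi (0 : ℝ)).indicator fun t => C * Real.exp ((c - lam) * t)) :=
  (integrable_indicator_iff measurableSet_Ioi).2
    ((integrableOn_exp_mul_Ioi (sub_neg.2 hlam) 0).const_mul C)

namespace IsHeatSolution

variable {q a : ℝ → ℝ} {u ux uxx ut : ℝ → ℝ → ℝ}

theorem isEternalHeatSolution_dampedExtension (hu : IsHeatSolution q a u ux uxx ut) (lam : ℝ) :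
    IsEternalHeatSolution (Ioo 0 1) (fun x => q x + lam) (dampedExtension lam u)
      (dampedExtension lam ux) (dampedExtension lam uxx) := by
  obtain ⟨-, hux, huxx, -, hut, -, hpde, -, -⟩ := hu
  refine ⟨fun x hx t => ?_, fun x hx t => ?_, fun x hx t => ?_⟩
  · exact hasDerivAt_dampedExtension lam fun ht => hux t ht x (Ioo_subset_Icc_self hx)
  · exact hasDerivAt_dampedExtension lam fun ht => huxx t ht x (Ioo_subset_Icc_self hx)
  · refine (hasDerivWithinAt_dampedExtension lam (hut x (Ioo_subset_Icc_self hx) t)).congr_deriv ?_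
    rcases le_or_gt t 0 with ht | ht
    · simp only [dampedExtension_of_nonpos _ _ _ ht, mul_zero]
    · simp only [dampedExtension_of_pos _ _ _ ht, hpde x hx t ht]
      ring

theorem continuousOn_dampedExtension (hu : IsHeatSolution q a u ux uxx ut) (lam : ℝ) :
    ContinuousOn (fun p : ℝ × ℝ => dampedExtension lam u p.1 p.2) (Icc 0 1 ×ˢ univ) := by
  obtain ⟨huc, -, -, -, -, -, -, hu0, -⟩ := hu
  have hclamp : ContinuousOn (fun p : ℝ × ℝ => Real.exp (-lam * p.2) * u p.1 (max p.2 0))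
      (Icc 0 1 ×ˢ univ) :=
    ContinuousOn.mul (by fun_prop) <| huc.comp (f := fun p : ℝ × ℝ => (p.1, max p.2 0))
      (by fun_prop) fun p hp => ⟨hp.1, mem_Ici.2 (le_max_right _ _)⟩
  refine hclamp.congr fun ⟨x, t⟩ hx => ?_
  rcases le_or_gt t 0 with ht | ht
  · simp only [dampedExtension_of_nonpos _ _ _ ht, max_eq_right ht, hu0 x hx.1, mul_zero]
  · simp only [dampedExtension_of_pos _ _ _ ht, max_eq_left ht.le]

theorem exists_stationary_laplace (hu : IsHeatSolution q a u ux uxx ut)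
    (hq : ContinuousOn q (Icc 0 1)) {C c lam : ℝ} (hbound : HeatGrowthBound u ux C c)
    (hlam : c < lam) :
    ∃ W W' : ℝ → ℝ, (∀ x, HasDerivAt W (W' x) x) ∧
      (∀ x ∈ Icc (0 : ℝ) 1, HasDerivAt W' ((q x + lam) * W x) x) ∧
      ∀ x ∈ Icc (0 : ℝ) 1, W x = ∫ t in Ioi 0, Real.exp (-lam * t) * u x t ∧
        W' x = ∫ t in Ioi 0, Real.exp (-lam * t) * ux x t := by
  have hβ := integrable_indicator_exp_mul hlam C
  have hu_le : ∀ x ∈ Icc (0 : ℝ) 1, ∀ t, |dampedExtension lam u x t| ≤ _ := fun x hx =>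
    abs_dampedExtension_le fun t ht =>
      (le_add_of_nonneg_right (abs_nonneg _)).trans (hbound x hx t (le_of_lt ht))
  have hux_le : ∀ x ∈ Icc (0 : ℝ) 1, ∀ t, |dampedExtension lam ux x t| ≤ _ := fun x hx =>
    abs_dampedExtension_le fun t ht =>
      (le_add_of_nonneg_left (abs_nonneg _)).trans (hbound x hx t (le_of_lt ht))
  have hcont := hu.continuousOn_dampedExtension lam
  obtain ⟨W, W', hW, hW', heq⟩ :=
    (hu.isEternalHeatSolution_dampedExtension lam).exists_stationary_eqOn_integral zero_lt_one
      (hq.add continuousOn_const) hcont hβ hu_le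
  refine ⟨W, W', hW, hW', fun x hx => ⟨?_, ?_⟩⟩
  · rw [← integral_dampedExtension, ← heq hx]
  rw [← integral_dampedExtension]
  have hderiv : HasDerivWithinAt (fun y => ∫ t, dampedExtension lam u y t)
      (∫ t, dampedExtension lam ux x t) (Icc 0 1) x :=
    hasDerivWithinAt_integral_of_dominated (convex_Icc 0 1) hx
      (fun y hy => hβ.mono' (continuousOn_univ.1 (hcont.uncurry_left y hy)).aestronglyMeasurable
        (ae_of_all _ (hu_le y hy)))
      (ae_of_all _ fun t y hy =>
        (hasDerivAt_dampedExtension lam fun ht => hu.2.1 t ht y hy).hasDerivWithinAt)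
      (ae_of_all _ fun t y hy => hux_le y hy t) hβ
  exact (uniqueDiffOn_Icc zero_lt_one x hx).eq_deriv _
    ((hW x).hasDerivWithinAt.congr heq (heq hx)) hderiv

end IsHeatSolution

theorem laplace_transform_identity_flux_right_general
    {q a : ℝ → ℝ} (hq : ContinuousOn q (Icc 0 1))
    {u ux uxx ut : ℝ → ℝ → ℝ} (hu : IsHeatSolution q a u ux uxx ut)
    {C c : ℝ} (hbound : HeatGrowthBound u ux C c) {lam : ℝ} (hlam : c < lam)
    {φ φ' : ℝ → ℝ} (hφ : IsSLSolution q (-lam) φ φ') :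
    (∫ t in Ioi (0 : ℝ), Real.exp (-lam * t) * ux 1 t) * φ 1
      = (∫ t in Ioi (0 : ℝ), Real.exp (-lam * t) * a t) * φ' 1 := by
  obtain ⟨W, W', hW, hW', hlaplace⟩ := hu.exists_stationary_laplace hq hbound hlam
  obtain ⟨hφ₁, hφ₂, hφ0, -⟩ := hφ
  obtain ⟨-, -, -, -, -, -, -, -, hbdry⟩ := hu
  have hW0 : W 0 = 0 := by
    rw [(hlaplace 0 (by simp)).1]
    exact setIntegral_eq_zero_of_forall_eq_zero fun t ht => by rw [(hbdry t ht).1, mul_zero]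
  have hW1 : W 1 = ∫ t in Ioi 0, Real.exp (-lam * t) * a t := by
    rw [(hlaplace 1 (by simp)).1]
    exact setIntegral_congr_fun measurableSet_Ioi fun t ht => by simp only [(hbdry t ht).2]
  have hwronskian := wronskian_eq zero_le_one (p := fun x => q x + lam) hφ₁
    (fun x hx => (hφ₂ x hx).congr_deriv (by ring)) (fun x _ => hW x) hW'
  rw [hφ0, hW0, zero_mul, mul_zero, sub_zero] at hwronskian
  rw [← (hlaplace 1 (by simp)).2, ← hW1]
  linarith

/-- Laplace-transform identity `B(λ) φ(1,-λ) = A(λ) φ'(1,-λ)` for the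
flux at `x = 1`, valid for every real `λ > c`. -/
theorem laplace_transform_identity_flux_right
    (q a : ℝ → ℝ) (hq : ContinuousOn q (Set.Icc 0 1))
    (ha : IsAdmissiblePulse a)
    (T : ℝ) (hT : 0 < T) (hsupp : ∀ t > T, a t = 0)
    (u ux uxx ut : ℝ → ℝ → ℝ) (hu : IsHeatSolution q a u ux uxx ut)
    (C c : ℝ) (hC : 0 < C) (hc : 0 < c) (hbound : HeatGrowthBound u ux C c)
    (lam : ℝ) (hlam : c < lam)
    (φ φ' : ℝ → ℝ) (hφ : IsSLSolution q (-lam) φ φ') :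
    (∫ t in Set.Ioi (0:ℝ), Real.exp (-lam * t) * ux 1 t) * φ 1
      = (∫ t in (0:ℝ)..T, Real.exp (-lam * t) * a t) * φ' 1 := by
  rw [intervalIntegral.integral_of_le hT.le,
    ← setIntegral_eq_of_subset_of_forall_sdiff_eq_zero measurableSet_Ioi Ioc_subset_Ioi_self
      fun t ht => by rw [hsupp t (not_le.1 fun h => ht.2 ⟨ht.1, h⟩), mul_zero]]
  exact laplace_transform_identity_flux_right_general hq hu hbound hlam hφ
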